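/- Let f be a polynomial of degree at most k on ℝ^n (n ≥ 3) and β a multi-index with |β| ≥ k+2. Then for any z and ε > 0 with the closed ball B_ε(z) contained in B_R, and any x ∈ B_ε(z), one has ∫_{B_R \ B_ε(z)} D_x^β Γ(x−y) f(y) dy = 0. -/

import Mathlib

open MeasureTheory Metric

noncomputable section

def sphArea (n : ℕ) : ℝ :=
  (μH[(n : ℝ) - 1] (sphere (0 : EuclideanSpace ℝ (Fin n)) 1)).toReal

def fundSol (n : ℕ) (x : EuclideanSpace ℝ (Fin n)) : ℝ :=
  (1 / (n * (2 - (n : ℝ)) * sphArea n)) * ‖x‖ ^ ((2 : ℝ) - n)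

def ee {n : ℕ} (i : Fin n) : EuclideanSpace ℝ (Fin n) := EuclideanSpace.single i 1

section Helpers

/-- Polynomial functions of degree `< d`. -/
inductive PL {n : ℕ} : ℕ → (EuclideanSpace ℝ (Fin n) → ℝ) → Prop
  | zero : PL 0 (fun _ => 0)
  | const (c : ℝ) : PL 1 (fun _ => c)
  | add {d f g} : PL d f → PL d g → PL d (fun x => f x + g x)
  | mulx {d f} (i : Fin n) : PL d f → PL (d + 1) (fun x => x i * f x)
  | succ {d f} : PL d f → PL (d + 1) f

/-- Polynomial in the first variable of degree `< d`, with continuous coefficients. -/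
inductive PQ {n : ℕ} : ℕ → (EuclideanSpace ℝ (Fin n) → EuclideanSpace ℝ (Fin n) → ℝ) → Prop
  | zero : PQ 0 (fun _ _ => 0)
  | const (a : EuclideanSpace ℝ (Fin n) → ℝ) (ha : Continuous a) : PQ 1 (fun _ w => a w)
  | add {d f g} : PQ d f → PQ d g → PQ d (fun x w => f x w + g x w)
  | mulx {d f} (i : Fin n) : PQ d f → PQ (d + 1) (fun x w => x i * f x w)
  | succ {d f} : PQ d f → PQ (d + 1) f

variable {n : ℕ}

theorem PL.mono {d e : ℕ} {f : EuclideanSpace ℝ (Fin n) → ℝ} (h : PL d f) (hde : d ≤ e) :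
    PL e f := by
  induction hde with
  | refl => exact h
  | step _ ih => exact ih.succ

theorem PQ.mono {d e : ℕ} {f : EuclideanSpace ℝ (Fin n) → EuclideanSpace ℝ (Fin n) → ℝ}
    (h : PQ d f) (hde : d ≤ e) : PQ e f := by
  induction hde with
  | refl => exact h
  | step _ ih => exact ih.succ

theorem PL.zero' (d : ℕ) : PL d (fun _ : EuclideanSpace ℝ (Fin n) => (0:ℝ)) :=
  PL.zero.mono (Nat.zero_le d)

theorem PQ.zero' (d : ℕ) :
    PQ d (fun _ _ : EuclideanSpace ℝ (Fin n) => (0:ℝ)) :=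
  PQ.zero.mono (Nat.zero_le d)

theorem PL.smul {d : ℕ} {f : EuclideanSpace ℝ (Fin n) → ℝ} (h : PL d f) (c : ℝ) :
    PL d (fun x => c * f x) := by
  induction h with
  | zero => simpa using PL.zero
  | const a => exact PL.const (c * a)
  | add _ _ h1 h2 => simpa [mul_add] using h1.add h2
  | mulx i _ h => 
    convert h.mulx i using 2
    ring
  | succ _ h => exact h.succ

theorem PQ.smul {d : ℕ} {f : EuclideanSpace ℝ (Fin n) → EuclideanSpace ℝ (Fin n) → ℝ}
    (h : PQ d f) (c : EuclideanSpace ℝ (Fin n) → ℝ) (hc : Continuous c) :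
    PQ d (fun x w => c w * f x w) := by
  induction h with
  | zero => simpa using PQ.zero
  | const a ha => exact PQ.const (fun w => c w * a w) (hc.mul ha)
  | add _ _ h1 h2 => simpa [mul_add] using h1.add h2
  | mulx i _ h => 
    convert h.mulx i using 3
    ring
  | succ _ h => exact h.succ

theorem PL.eq_zero {d : ℕ} {f : EuclideanSpace ℝ (Fin n) → ℝ} (h : PL d f) (hd : d = 0) (x) :
    f x = 0 := by
  induction h with
  | zero => rfl
  | const a => omega
  | add _ _ h1 h2 => simp [h1 hd, h2 hd]
  | mulx i _ h => omega
  | succ _ h => omega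

theorem PQ.eq_zero {d : ℕ} {f : EuclideanSpace ℝ (Fin n) → EuclideanSpace ℝ (Fin n) → ℝ}
    (h : PQ d f) (hd : d = 0) (x w) : f x w = 0 := by
  induction h with
  | zero => rfl
  | const a => omega
  | add _ _ h1 h2 => simp [h1 hd, h2 hd]
  | mulx i _ h => omega
  | succ _ h => omega

theorem PL.mul {d e : ℕ} {f g : EuclideanSpace ℝ (Fin n) → ℝ} (h : PL d f) (hg : PL (e+1) g) :
    PL (d + e) (fun x => f x * g x) := by
  induction h with
  | zero => simpa using PL.zero' _
  | const a => rw [add_comm]; exact hg.smul a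
  | add _ _ h1 h2 => simpa [add_mul] using h1.add h2
  | mulx i _ h => 
    convert h.mulx i using 1
    · omega
    · funext x; ring
  | succ _ h => rw [Nat.succ_add]; exact h.succ

theorem PQ.mul {d e : ℕ} {f g : EuclideanSpace ℝ (Fin n) → EuclideanSpace ℝ (Fin n) → ℝ}
    (h : PQ d f) (hg : PQ (e+1) g) :
    PQ (d + e) (fun x w => f x w * g x w) := by
  induction h with
  | zero => simpa using PQ.zero' _
  | const a ha => rw [add_comm]; exact hg.smul a ha
  | add _ _ h1 h2 => simpa [add_mul] using h1.add h2
  | mulx i _ h => 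
    convert h.mulx i using 1
    · omega
    · funext x w; ring
  | succ _ h => rw [Nat.succ_add]; exact h.succ

theorem PL.contDiff {d : ℕ} {f : EuclideanSpace ℝ (Fin n) → ℝ} (h : PL d f) :
    ContDiff ℝ ⊤ f := by
  induction h with
  | zero => fun_prop
  | const a => fun_prop
  | add _ _ h1 h2 => fun_prop
  | mulx i _ h => fun_prop
  | succ _ h => exact h

theorem PQ.cont {d : ℕ} {f : EuclideanSpace ℝ (Fin n) → EuclideanSpace ℝ (Fin n) → ℝ}
    (h : PQ d f) (x) : Continuous (f x) := by
  induction h with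
  | zero => fun_prop
  | const a ha => exact ha
  | add _ _ h1 h2 => fun_prop
  | mulx i _ h => fun_prop
  | succ _ h => exact h

theorem PL.deriv {d : ℕ} {f : EuclideanSpace ℝ (Fin n) → ℝ} (h : PL d f)
    (e : EuclideanSpace ℝ (Fin n)) : PL (d - 1) (fun x => fderiv ℝ f x e) := by
  induction h with
  | zero => simpa using PL.zero
  | const a => simpa using PL.zero
  | @add d f g hf hg h1 h2 => 
    convert h1.add h2 using 2 with x
    rw [fderiv_fun_add (hf.contDiff.differentiable (by simp) x)
      (hg.contDiff.differentiable (by simp) x)]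
    rfl
  | @mulx d f i hf h => 
    have : (fun x : EuclideanSpace ℝ (Fin n) => fderiv ℝ (fun x => x i * f x) x e)
        = fun x => e i * f x + x i * fderiv ℝ f x e := by
      funext x
      have h1 : HasFDerivAt (fun x : EuclideanSpace ℝ (Fin n) => x i)
        (EuclideanSpace.proj i : EuclideanSpace ℝ (Fin n) →L[ℝ] ℝ) x :=
        (EuclideanSpace.proj i : EuclideanSpace ℝ (Fin n) →L[ℝ] ℝ).hasFDerivAt
      have h2 := (hf.contDiff.differentiable (by simp) x).hasFDerivAt
      rw [(h1.fun_mul h2).fderiv]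
      simp
      ring
    rw [this]
    refine (hf.smul _).add ?_
    rcases d with _ | d
    · have : f = fun _ => 0 := by funext x; exact hf.eq_zero rfl x
      subst this
      simpa using PL.zero
    · exact h.mulx i
  | @succ d f hf h => 
    rcases d with _ | d
    · exact h
    · exact h.succ

theorem PL.iter {m : ℕ} : ∀ {f : EuclideanSpace ℝ (Fin n) → ℝ} (_ : PL m f) (x)
    (v : Fin m → EuclideanSpace ℝ (Fin n)), iteratedFDeriv ℝ m f x v = 0 := by
  induction m with
  | zero => intro f h x v; simpa using h.eq_zero rfl x
  | succ m ih =>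
    intro f h x v
    rw [iteratedFDeriv_succ_apply_right,
      ← iteratedFDeriv_clm_apply_const_apply (n := ⊤) (h.contDiff.fderiv_right (m := ⊤) (by simp)) (by exact_mod_cast le_top)]
    exact ih (h.deriv _) x _

theorem PL.eval {k : ℕ} (p : MvPolynomial (Fin n) ℝ) (hp : p.totalDegree ≤ k) :
    PL (k + 1) (fun y : EuclideanSpace ℝ (Fin n) => MvPolynomial.eval (fun i => y i) p) := by
  have hsum : ∀ (s : Finset (Fin n →₀ ℕ)) (F : (Fin n →₀ ℕ) → EuclideanSpace ℝ (Fin n) → ℝ),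
      (∀ d ∈ s, PL (k+1) (F d)) → PL (k+1) (fun y => ∑ d ∈ s, F d y) := by
    intro s F
    induction s using Finset.induction_on with
    | empty => intro _; simpa using PL.zero' _
    | insert a s ha ih =>
      intro h
      simp only [Finset.sum_insert ha]
      exact (h a (by simp)).add (ih fun d hd => h d (by simp [hd]))
  have hpow : ∀ (i : Fin n) (j : ℕ), PL (j+1) (fun y : EuclideanSpace ℝ (Fin n) => y i ^ j) := by
    intro i j
    induction j with
    | zero => simpa using PL.const 1
    | succ j ih => simpa [pow_succ'] using ih.mulx i
  have hprod : ∀ (d : Fin n → ℕ) (s : Finset (Fin n)),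
      PL ((∑ i ∈ s, d i) + 1) (fun y : EuclideanSpace ℝ (Fin n) => ∏ i ∈ s, y i ^ d i) := by
    intro d s
    induction s using Finset.induction_on with
    | empty => simpa using PL.const 1
    | insert a s ha ih =>
      simp only [Finset.sum_insert ha, Finset.prod_insert ha]
      have := (hpow a (d a)).mul ih
      exact this.mono (by omega)
  simp only [MvPolynomial.eval_eq]
  apply hsum
  intro d hd
  refine PL.smul ?_ _
  refine (hprod d _).mono ?_
  have := MvPolynomial.le_totalDegree hd
  have : (d.sum fun _ e => e) = ∑ i ∈ d.support, d i := rfl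
  omega

theorem PQ.integral {d : ℕ} {f : EuclideanSpace ℝ (Fin n) → EuclideanSpace ℝ (Fin n) → ℝ}
    (h : PQ d f) (σ : Measure (sphere (0 : EuclideanSpace ℝ (Fin n)) 1)) [IsFiniteMeasure σ] :
    PL d (fun x => ∫ ω, f x (ω : EuclideanSpace ℝ (Fin n)) ∂σ) := by
  have int : ∀ g : EuclideanSpace ℝ (Fin n) → ℝ, Continuous g → 
      Integrable (fun ω : sphere (0 : EuclideanSpace ℝ (Fin n)) 1 => g ω) σ := by
    intro g hg
    have : Continuous (fun ω : sphere (0 : EuclideanSpace ℝ (Fin n)) 1 => g ω) := by fun_prop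
    exact this.integrable_of_hasCompactSupport (HasCompactSupport.of_compactSpace _)
  induction h with
  | zero => simpa using PL.zero
  | const a ha => exact PL.const _
  | add hf hg h1 h2 => 
    convert h1.add h2 using 2 with x
    exact integral_add (int _ (hf.cont x)) (int _ (hg.cont x))
  | mulx i _ h => 
    convert h.mulx i using 2 with x
    exact integral_const_mul _ _
  | succ _ h => exact h.succ

theorem PQ.coord (i : Fin n) : PQ 2 (fun x _ : EuclideanSpace ℝ (Fin n) => x i) := by
  simpa using (PQ.const (fun _ => (1:ℝ)) continuous_const).mulx i

theorem PQ.sum {ι : Type*} (s : Finset ι) {d : ℕ}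
    (F : ι → EuclideanSpace ℝ (Fin n) → EuclideanSpace ℝ (Fin n) → ℝ)
    (h : ∀ i, PQ d (F i)) : PQ d (fun x w => ∑ i ∈ s, F i x w) := by
  classical
  induction s using Finset.induction_on with
  | empty => simpa using PQ.zero' _
  | insert a s ha ih =>
    simp only [Finset.sum_insert ha]
    exact (h a).add ih

theorem PQ.neg {d : ℕ} {f : EuclideanSpace ℝ (Fin n) → EuclideanSpace ℝ (Fin n) → ℝ}
    (h : PQ d f) : PQ d (fun x w => - f x w) := by
  simpa using h.smul (fun _ => -1) continuous_const

theorem PQ.sub {d : ℕ} {f g : EuclideanSpace ℝ (Fin n) → EuclideanSpace ℝ (Fin n) → ℝ}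
    (h : PQ d f) (hg : PQ d g) : PQ d (fun x w => f x w - g x w) := by
  simpa [sub_eq_add_neg] using h.add hg.neg

def bb (c x w : EuclideanSpace ℝ (Fin n)) : ℝ := inner ℝ (x - c) w
def qq (c : EuclideanSpace ℝ (Fin n)) (ρ : ℝ) (x : EuclideanSpace ℝ (Fin n)) : ℝ :=
  ‖x - c‖ ^ 2 - ρ ^ 2

theorem PQ.inner_x : PQ 2 (fun x w : EuclideanSpace ℝ (Fin n) => inner ℝ x w) := by
  have : (fun x w : EuclideanSpace ℝ (Fin n) => inner ℝ x w) = fun x w => ∑ i, w i * x i := by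
    funext x w
    simp [PiLp.inner_apply]
  rw [this]
  exact PQ.sum _ _ fun i => (PQ.coord i).smul (fun w => w i) (by fun_prop)

theorem PQ.bb_x (c : EuclideanSpace ℝ (Fin n)) : PQ 2 (fun x w => bb c x w) := by
  simp only [bb, inner_sub_left]
  exact PQ.inner_x.sub (PQ.const _ (by fun_prop)).succ

theorem PQ.bb_sub (c c' : EuclideanSpace ℝ (Fin n)) :
    PQ 1 (fun x w => bb c x w - bb c' x w) := by
  simp only [bb, inner_sub_left]
  convert PQ.const (fun w : EuclideanSpace ℝ (Fin n) => inner ℝ c' w - inner ℝ c w) (by fun_prop) using 3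
  ring

theorem PQ.nsq : PQ 3 (fun x _ : EuclideanSpace ℝ (Fin n) => ‖x‖ ^ 2) := by
  have : (fun x _ : EuclideanSpace ℝ (Fin n) => ‖x‖ ^ 2) = fun x _ => ∑ i, x i * x i := by
    funext x w
    rw [EuclideanSpace.norm_sq_eq]; simp [sq]
  rw [this]
  exact PQ.sum _ _ fun i => (PQ.coord i).mulx i

theorem PQ.inner_c (c : EuclideanSpace ℝ (Fin n)) :
    PQ 2 (fun x _ : EuclideanSpace ℝ (Fin n) => inner ℝ x c) := by
  have : (fun x _ : EuclideanSpace ℝ (Fin n) => inner ℝ x c) = fun x _ => ∑ i, c i * x i := by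
    funext x w
    simp [PiLp.inner_apply]
  rw [this]
  exact PQ.sum _ _ fun i => (PQ.coord i).smul (fun w => c i) (by fun_prop)

theorem qq_eq (c : EuclideanSpace ℝ (Fin n)) (ρ : ℝ) (x : EuclideanSpace ℝ (Fin n)) :
    qq c ρ x = ‖x‖ ^ 2 + ((-2) * inner ℝ x c + (‖c‖ ^ 2 - ρ ^ 2)) := by
  rw [qq, norm_sub_sq_real]; ring

theorem PQ.qq_aux (c : EuclideanSpace ℝ (Fin n)) (ρ : ℝ) :
    PQ 2 (fun x _ => (-2) * inner ℝ x c + (‖c‖ ^ 2 - ρ ^ 2)) :=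
  ((PQ.inner_c c).smul (fun _ => -2) continuous_const).add (PQ.const (fun _ => ‖c‖ ^ 2 - ρ ^ 2) continuous_const).succ

theorem PQ.qq_x (c : EuclideanSpace ℝ (Fin n)) (ρ : ℝ) : PQ 3 (fun x _ => qq c ρ x) := by
  simp only [qq_eq]
  exact PQ.nsq.add (PQ.qq_aux c ρ).succ

theorem PQ.qq_sub (c c' : EuclideanSpace ℝ (Fin n)) (ρ ρ' : ℝ) :
    PQ 2 (fun x _ => qq c ρ x - qq c' ρ' x) := by
  simp only [qq_eq]
  convert (PQ.qq_aux c ρ).sub (PQ.qq_aux c' ρ') using 3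
  ring

/-- power sums of the two roots of `t^2 + 2 b t + q`. -/
def ps (b q : ℝ) : ℕ → ℝ
  | 0 => 2
  | 1 => -2 * b
  | (s+2) => -2 * b * ps b q (s+1) - q * ps b q s

theorem ps_eq (b q t t' : ℝ) (h1 : t + t' = -2 * b) (h2 : t * t' = q) :
    ∀ s, ps b q s = t ^ s + t' ^ s ∧ ps b q (s+1) = t ^ (s+1) + t' ^ (s+1) := by
  intro s
  induction s with
  | zero => simp [ps, h1]; norm_num
  | succ s ih =>
    refine ⟨ih.2, ?_⟩
    rw [ps, ih.1, ih.2, ← h1, ← h2]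
    ring

theorem PQ.ps_x (c : EuclideanSpace ℝ (Fin n)) (ρ : ℝ) (s : ℕ) :
    PQ (s+1) (fun x w => ps (bb c x w) (qq c ρ x) s) ∧
    PQ (s+2) (fun x w => ps (bb c x w) (qq c ρ x) (s+1)) := by
  induction s with
  | zero =>
    simp only [ps]
    exact ⟨PQ.const _ continuous_const, (PQ.bb_x c).smul (fun _ => -2) continuous_const⟩
  | succ s ih =>
    refine ⟨ih.2, ?_⟩
    have h1 := (((PQ.bb_x c).smul (fun _ => -2) continuous_const).mul ih.2)
    have h2 := ((PQ.qq_x c ρ).mul ih.1)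
    have := (h1.mono (show _ ≤ s + 1 + 2 by omega)).sub (h2.mono (show _ ≤ s + 1 + 2 by omega))
    simpa only [ps] using this

theorem PQ.ps_sub (c c' : EuclideanSpace ℝ (Fin n)) (ρ ρ' : ℝ) (s : ℕ) :
    PQ s (fun x w => ps (bb c x w) (qq c ρ x) s
      - ps (bb c' x w) (qq c' ρ' x) s) ∧
    PQ (s+1) (fun x w => ps (bb c x w) (qq c ρ x) (s+1)
      - ps (bb c' x w) (qq c' ρ' x) (s+1)) := by
  induction s with
  | zero =>
    simp only [ps]
    refine ⟨by simpa using PQ.zero, ?_⟩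
    convert (PQ.bb_sub c c').smul (fun _ => -2) continuous_const using 3
    ring
  | succ s ih =>
    refine ⟨ih.2, ?_⟩
    have h1 := ((PQ.bb_sub c c').smul (fun _ => -2) continuous_const).mul (PQ.ps_x c ρ s).2
    have h2 := ih.2.mul ((PQ.bb_x c').smul (fun _ => -2) continuous_const)
    have h3 := (PQ.qq_sub c c' ρ ρ').mul (PQ.ps_x c ρ s).1
    have h4 := ih.1.mul (PQ.qq_x c' ρ')
    have := ((h1.mono (show _ ≤ s + 1 + 1 by omega)).add (h2.mono (show _ ≤ s + 1 + 1 by omega))).sub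
      ((h3.mono (show _ ≤ s + 1 + 1 by omega)).add (h4.mono (show _ ≤ s + 1 + 1 by omega)))
    convert this using 3
    simp only [ps]
    ring

/-- The two roots t and its conjugate of `|x + t w - c|^2 = ρ^2`. -/
def Roots (c : EuclideanSpace ℝ (Fin n)) (ρ : ℝ) (x w : EuclideanSpace ℝ (Fin n)) (t t' : ℝ) : Prop :=
  t + t' = -2 * bb c x w ∧ t * t' = qq c ρ x

theorem radial (c c' : EuclideanSpace ℝ (Fin n)) (ρ ρ' : ℝ) {d : ℕ}
    {f : EuclideanSpace ℝ (Fin n) → ℝ} (h : PL d f) :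
    ∀ j : ℕ, ∃ Q, PQ (d + j + 1) Q ∧ ∀ x w t1 t1' t2 t2', Roots c ρ x w t1 t1' →
      Roots c' ρ' x w t2 t2' →
      (∫ t in t1..t2, t ^ (j+1) * f (x + t • w)) + (∫ t in t1'..t2', t ^ (j+1) * f (x + t • w))
        = Q x w := by
  induction h with
  | zero => intro j; exact ⟨_, PQ.zero' _, by simp⟩
  | const a =>
    intro j
    refine ⟨_, ((PQ.ps_sub c' c ρ' ρ (j+2)).1.smul (fun _ => a / (j + 2)) continuous_const).mono
      (by omega), ?_⟩
    intro x w t1 t1' t2 t2' h1 h2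
    have e1 := (ps_eq _ _ _ _ h1.1 h1.2 (j+2)).1
    have e2 := (ps_eq _ _ _ _ h2.1 h2.2 (j+2)).1
    simp only [intervalIntegral.integral_mul_const, integral_pow]
    rw [e1, e2]
    push_cast
    have : (j:ℝ) + 2 ≠ 0 := by positivity
    have : (j:ℝ) + 1 + 1 ≠ 0 := by positivity
    field_simp
    ring
  | add hf hg h1 h2 =>
    intro j
    obtain ⟨Q1, q1, e1⟩ := h1 j
    obtain ⟨Q2, q2, e2⟩ := h2 j
    refine ⟨_, q1.add q2, ?_⟩
    intro x w t1 t1' t2 t2' r1 r2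
    rw [← e1 x w t1 t1' t2 t2' r1 r2, ← e2 x w t1 t1' t2 t2' r1 r2]
    have c1 := hf.contDiff.continuous
    have c2 := hg.contDiff.continuous
    simp only [mul_add]
    rw [intervalIntegral.integral_add, intervalIntegral.integral_add]
    · ring
    all_goals exact Continuous.intervalIntegrable (by fun_prop) _ _
  | @mulx d f i hf h =>
    intro j
    obtain ⟨Q1, q1, e1⟩ := h j
    obtain ⟨Q2, q2, e2⟩ := h (j+1)
    refine ⟨_, ((q1.mulx i).mono (show _ ≤ d + 1 + j + 1 by omega)).add
      ((q2.smul (fun w => w i) (by fun_prop)).mono (by omega)), ?_⟩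
    intro x w t1 t1' t2 t2' r1 r2
    rw [← e1 x w t1 t1' t2 t2' r1 r2, ← e2 x w t1 t1' t2 t2' r1 r2]
    have c1 := hf.contDiff.continuous
    have : (fun t : ℝ => t ^ (j+1) * ((x + t • w) i * f (x + t • w))) = fun t =>
      x i * (t ^ (j+1) * f (x + t • w)) + w i * (t ^ (j+1+1) * f (x + t • w)) := by
      funext t
      simp
      ring
    rw [this]
    rw [intervalIntegral.integral_add, intervalIntegral.integral_add]
    · simp only [intervalIntegral.integral_const_mul]
      ring
    all_goals exact Continuous.intervalIntegrable (by fun_prop) _ _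
  | succ _ h =>
    intro j
    obtain ⟨Q1, q1, e1⟩ := h j
    exact ⟨Q1, q1.mono (by omega), e1⟩

open scoped ContDiff Convolution

theorem conv_iter {n : ℕ} (m : ℕ) (g : EuclideanSpace ℝ (Fin n) → ℝ)
    (hg : LocallyIntegrable g volume) :
    ∀ (K : EuclideanSpace ℝ (Fin n) → ℝ) (_ : ContDiff ℝ ∞ K) (_ : HasCompactSupport K)
      (x : EuclideanSpace ℝ (Fin n)) (v : Fin m → EuclideanSpace ℝ (Fin n)),
      iteratedFDeriv ℝ m (g ⋆[ContinuousLinearMap.mul ℝ ℝ, volume] K) x v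
        = ∫ y, g y * iteratedFDeriv ℝ m K (x - y) v := by
  induction m with
  | zero => intro K hK hc x v; simp [convolution]
  | succ m ih =>
    intro K hK hc x v
    have hu : ContDiff ℝ ∞ (g ⋆[ContinuousLinearMap.mul ℝ ℝ, volume] K) :=
      hc.contDiff_convolution_right _ hg hK
    have hK1 : ContDiff ℝ ∞ (fun y => fderiv ℝ K y (v (Fin.last m))) := by
      exact (hK.fderiv_right (m := ∞) (by simp)).clm_apply contDiff_const
    have hc1 : HasCompactSupport (fun y => fderiv ℝ K y (v (Fin.last m))) := hc.fderiv_apply ℝ _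
    have key : ∀ (w : EuclideanSpace ℝ (Fin n) → ℝ), ContDiff ℝ ∞ w → ∀ x,
        iteratedFDeriv ℝ (m+1) w x v
          = iteratedFDeriv ℝ m (fun y => fderiv ℝ w y (v (Fin.last m))) x (Fin.init v) := by
      intro w hw x
      rw [iteratedFDeriv_succ_apply_right]
      rw [iteratedFDeriv_clm_apply_const_apply (n := ∞) (hw.fderiv_right (m := ∞) (by simp)) (by exact_mod_cast le_top)]
      
    rw [key _ hu]
    have e : (fun y => fderiv ℝ (g ⋆[ContinuousLinearMap.mul ℝ ℝ, volume] K) y (v (Fin.last m)))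
        = (g ⋆[ContinuousLinearMap.mul ℝ ℝ, volume] (fun y => fderiv ℝ K y (v (Fin.last m)))) := by
      funext y
      rw [(hc.hasFDerivAt_convolution_right _ hg (hK.of_le (by simp)) y).fderiv]
      rw [convolution_precompR_apply _ hg (hc.fderiv ℝ) (hK.continuous_fderiv (by simp))]
    rw [e, ih _ hK1 hc1]
    simp_rw [key K hK]

theorem polar {n : ℕ} (hn : 3 ≤ n) (G : EuclideanSpace ℝ (Fin n) → ℝ) (hG : Integrable G) :
    ∫ w, G w = ∫ ζ : sphere (0 : EuclideanSpace ℝ (Fin n)) 1,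
      (∫ r in Set.Ioi (0:ℝ), r ^ (n-1) * G (r • (ζ : EuclideanSpace ℝ (Fin n))))
        ∂((volume : Measure (EuclideanSpace ℝ (Fin n))).toSphere) := by
  set μ : Measure (EuclideanSpace ℝ (Fin n)) := volume
  have hd : Module.finrank ℝ (EuclideanSpace ℝ (Fin n)) = n := by simp
  have : Nontrivial (EuclideanSpace ℝ (Fin n)) := by
    apply Module.nontrivial_of_finrank_pos (R := ℝ); omega
  have mp := μ.measurePreserving_homeomorphUnitSphereProd
  rw [hd] at mp
  have emb := (homeomorphUnitSphereProd (EuclideanSpace ℝ (Fin n))).measurableEmbedding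
  let H : sphere (0 : EuclideanSpace ℝ (Fin n)) 1 × Set.Ioi (0:ℝ) → ℝ :=
    fun p => G (p.2.1 • p.1.1)
  have hH : ∀ x, H (homeomorphUnitSphereProd (EuclideanSpace ℝ (Fin n)) x) = G x.1 := by
    intro x
    have := congrArg Subtype.val
      ((homeomorphUnitSphereProd (EuclideanSpace ℝ (Fin n))).symm_apply_apply x)
    simp only [homeomorphUnitSphereProd_symm_apply_coe] at this
    simp only [H]
    rw [this]
  have hInt : Integrable H (μ.toSphere.prod (Measure.volumeIoiPow (n-1))) := by
    rw [← mp.integrable_comp_emb emb]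
    have : (H ∘ homeomorphUnitSphereProd (EuclideanSpace ℝ (Fin n))) = G ∘ Subtype.val := by
      funext x; exact hH x
    rw [this, ← integrableOn_iff_comap_subtypeVal (by measurability)]
    exact hG.integrableOn
  calc ∫ w, G w = ∫ x : ({(0)}ᶜ : Set (EuclideanSpace ℝ (Fin n))), G x.1 ∂(μ.comap (↑)) := by
        rw [integral_subtype_comap (measurableSet_singleton _).compl G,
          restrict_compl_singleton]
    _ = ∫ p, H p ∂(μ.toSphere.prod (Measure.volumeIoiPow (n-1))) := by
        rw [← mp.integral_comp emb]
        simp_rw [hH]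
    _ = _ := by
        rw [integral_prod _ hInt]
        congr 1
        funext ζ
        simp only [Measure.volumeIoiPow, ENNReal.ofReal, H]
        rw [integral_withDensity_eq_integral_smul,
          integral_subtype_comap measurableSet_Ioi fun a ↦ Real.toNNReal (a ^ (n - 1)) • G (a • ζ.1),
          setIntegral_congr_fun measurableSet_Ioi fun x hx ↦ ?_]
        · simp only [NNReal.smul_def, Real.coe_toNNReal _ (pow_nonneg (le_of_lt hx.out) _), smul_eq_mul]
        · exact (measurable_subtype_coe.pow_const _).real_toNNReal

theorem exists_roots (c : EuclideanSpace ℝ (Fin n)) (ρ : ℝ) (x w : EuclideanSpace ℝ (Fin n))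
    (hx : x ∈ ball c ρ) (hw : ‖w‖ = 1) :
    ∃ t t', Roots c ρ x w t t' ∧ t' < 0 ∧ 0 < t ∧ (x + t • w ∈ closedBall c ρ) ∧
      (x + t' • w ∈ closedBall c ρ) ∧ ∀ r : ℝ, (x + r • w ∈ ball c ρ ↔ t' < r ∧ r < t) := by
  have hd : ‖x - c‖ < ρ := by simpa [dist_eq_norm] using hx
  have hρ : 0 < ρ := lt_of_le_of_lt (norm_nonneg _) hd
  have hq : qq c ρ x < 0 := by
    have : ‖x - c‖ ^ 2 < ρ ^ 2 := by gcongr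
    unfold qq; linarith
  set b := bb c x w with hb
  set q := qq c ρ x with hq'
  set s := Real.sqrt (b ^ 2 - q) with hs
  have hs2 : s ^ 2 = b ^ 2 - q := Real.sq_sqrt (by nlinarith)
  have hs0 : 0 ≤ s := Real.sqrt_nonneg _
  have hsb : |b| < s := by
    exact abs_lt_of_sq_lt_sq (by linarith) hs0
  obtain ⟨hsb1, hsb2⟩ := abs_lt.mp hsb
  have hnorm : ∀ r : ℝ, ‖x + r • w - c‖ ^ 2 - ρ ^ 2 = (r - (-b + s)) * (r - (-b - s)) := by
    intro r
    have : x + r • w - c = (x - c) + r • w := by abel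
    rw [this, norm_add_sq_real, inner_smul_right, norm_smul, hw]
    have e1 : inner ℝ (x - c) w = b := rfl
    have e2 : ‖x - c‖ ^ 2 = q + ρ ^ 2 := by rw [hq', qq]; ring
    rw [e1, e2]
    simp only [Real.norm_eq_abs, mul_one, sq_abs]
    linear_combination (1:ℝ) * hs2
  refine ⟨-b + s, -b - s, ⟨by ring, by linear_combination (-1:ℝ) * hs2⟩, by linarith, by linarith, ?_, ?_, ?_⟩
  · rw [mem_closedBall, dist_eq_norm]
    have := hnorm (-b + s)
    rw [sub_self, zero_mul] at this
    exact le_of_sq_le_sq (by linarith) hρ.le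
  · rw [mem_closedBall, dist_eq_norm]
    have := hnorm (-b - s)
    rw [sub_self, mul_zero] at this
    exact le_of_sq_le_sq (by linarith) hρ.le
  · intro r
    rw [mem_ball, dist_eq_norm, ← sq_lt_sq₀ (norm_nonneg _) hρ.le, ← sub_neg, hnorm, mul_neg_iff]
    constructor
    · rintro (⟨h1, h2⟩ | ⟨h1, h2⟩)
      · linarith
      · constructor <;> linarith
    · rintro ⟨h1, h2⟩
      right
      constructor <;> linarith

theorem inner_int (R ε : ℝ) (z : EuclideanSpace ℝ (Fin n))
    (hz : closedBall z ε ⊆ ball (0 : EuclideanSpace ℝ (Fin n)) R)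
    (f : EuclideanSpace ℝ (Fin n) → ℝ) (hf : Continuous f)
    (x w : EuclideanSpace ℝ (Fin n))
    (hx : x ∈ ball z ε) (hw : ‖w‖ = 1) :
    ∃ t1 t1' t2 t2', Roots z ε x w t1 t1' ∧ Roots 0 R x w t2 t2' ∧
      ∫ r in Set.Ioi (0:ℝ), r * ((ball 0 R \ ball z ε).indicator f (x + r • w)
        + (ball 0 R \ ball z ε).indicator f (x - r • w))
      = (∫ t in t1..t2, t ^ (0+1) * f (x + t • w)) + (∫ t in t1'..t2', t ^ (0+1) * f (x + t • w)) := by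
  obtain ⟨t1, t1', hr1, n1, p1, c1, c1', m1⟩ := exists_roots z ε x w hx hw
  obtain ⟨t2, t2', hr2, n2, p2, c2, c2', m2⟩ :=
    exists_roots 0 R x w (hz (ball_subset_closedBall hx)) hw
  refine ⟨t1, t1', t2, t2', hr1, hr2, ?_⟩
  have h12 := ((m2 t1).1 (hz c1)).2
  have h12' := ((m2 t1').1 (hz c1')).1
  have e : ∀ r ∈ Set.Ioi (0:ℝ), r * ((ball 0 R \ ball z ε).indicator f (x + r • w)
        + (ball 0 R \ ball z ε).indicator f (x - r • w))
      = (Set.Ico t1 t2).indicator (fun r => r * f (x + r • w)) r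
        + (Set.Ico (-t1') (-t2')).indicator (fun r => r * f (x + (-r) • w)) r := by
    intro r hr
    have hr : 0 < r := hr
    have a1 : (x + r • w ∈ ball (0 : EuclideanSpace ℝ (Fin n)) R \ ball z ε) ↔ r ∈ Set.Ico t1 t2 := by
      rw [Set.mem_sdiff, m1, m2, Set.mem_Ico]
      constructor
      · rintro ⟨⟨h1, h2⟩, h3⟩
        exact ⟨by by_contra h; exact h3 ⟨by linarith, by linarith⟩, h2⟩
      · rintro ⟨h1, h2⟩
        exact ⟨⟨by linarith, h2⟩, fun h => by linarith [h.2]⟩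
    have a2 : (x - r • w ∈ ball (0 : EuclideanSpace ℝ (Fin n)) R \ ball z ε) ↔
        r ∈ Set.Ico (-t1') (-t2') := by
      have : x - r • w = x + (-r) • w := by rw [neg_smul]; abel
      rw [this, Set.mem_sdiff, m1, m2, Set.mem_Ico]
      constructor
      · rintro ⟨⟨h1, h2⟩, h3⟩
        exact ⟨by by_contra h; exact h3 ⟨by linarith, by linarith⟩, by linarith⟩
      · rintro ⟨h1, h2⟩
        exact ⟨⟨by linarith, by linarith⟩, fun h => by linarith [h.1]⟩
    have : x - r • w = x + (-r) • w := by rw [neg_smul]; abel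
    rw [mul_add]
    congr 1
    · by_cases h : r ∈ Set.Ico t1 t2
      · rw [Set.indicator_of_mem h, Set.indicator_of_mem (a1.2 h)]
      · rw [Set.indicator_of_notMem h, Set.indicator_of_notMem (fun h' => h (a1.1 h')), mul_zero]
    · by_cases h : r ∈ Set.Ico (-t1') (-t2')
      · rw [Set.indicator_of_mem h, Set.indicator_of_mem (a2.2 h), this]
      · rw [Set.indicator_of_notMem h, Set.indicator_of_notMem (fun h' => h (a2.1 h')), mul_zero]
  rw [setIntegral_congr_fun measurableSet_Ioi e]
  have i1 : Integrable ((Set.Ico t1 t2).indicator (fun r => r * f (x + r • w))) := by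
    rw [integrable_indicator_iff measurableSet_Ico]
    exact (Continuous.integrableOn_Icc (by fun_prop)).mono_set Set.Ico_subset_Icc_self
  have i2 : Integrable ((Set.Ico (-t1') (-t2')).indicator (fun r => r * f (x + (-r) • w))) := by
    rw [integrable_indicator_iff measurableSet_Ico]
    exact (Continuous.integrableOn_Icc (by fun_prop)).mono_set Set.Ico_subset_Icc_self
  rw [integral_add i1.integrableOn i2.integrableOn]
  rw [setIntegral_indicator measurableSet_Ico, setIntegral_indicator measurableSet_Ico]
  have s1 : Set.Ioi 0 ∩ Set.Ico t1 t2 = Set.Ico t1 t2 :=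
    Set.inter_eq_right.2 fun r hr => lt_of_lt_of_le p1 hr.1
  have s2 : Set.Ioi 0 ∩ Set.Ico (-t1') (-t2') = Set.Ico (-t1') (-t2') :=
    Set.inter_eq_right.2 fun r hr => lt_of_lt_of_le (by linarith : 0 < -t1') hr.1
  rw [s1, s2, integral_Ico_eq_integral_Ioc, integral_Ico_eq_integral_Ioc,
    ← intervalIntegral.integral_of_le h12.le, ← intervalIntegral.integral_of_le (by linarith)]
  simp only [zero_add, pow_one]
  congr 1
  have := intervalIntegral.integral_comp_neg (a := -t1') (b := -t2') (fun t => t * f (x + t • w))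
  rw [neg_neg, neg_neg] at this
  rw [intervalIntegral.integral_symm t2' t1', ← this, ← intervalIntegral.integral_neg]
  congr 1
  funext t
  ring

theorem fundSol_contDiffAt (w : EuclideanSpace ℝ (Fin n)) (hw : w ≠ 0) :
    ContDiffAt ℝ ∞ (fundSol n) w := by
  unfold fundSol
  exact contDiffAt_const.mul ((contDiffAt_norm ℝ hw).rpow_const_of_ne (by simpa using hw))

theorem potential (hn : 3 ≤ n) (k : ℕ) (R ε : ℝ) (z : EuclideanSpace ℝ (Fin n))
    (hz : closedBall z ε ⊆ ball (0 : EuclideanSpace ℝ (Fin n)) R)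
    (f : EuclideanSpace ℝ (Fin n) → ℝ) (hf : PL (k+1) f) :
    ∃ P, PL (k+2) P ∧ ∀ x ∈ ball z ε,
      ∫ y, (ball 0 R \ ball z ε).indicator f y * fundSol n (x - y) = P x := by
  obtain ⟨Q, hQ, hQe⟩ := radial z 0 ε R hf 0
  set C : ℝ := (1 / (n * (2 - (n : ℝ)) * sphArea n)) with hC
  set g := (ball (0 : EuclideanSpace ℝ (Fin n)) R \ ball z ε).indicator f with hg
  refine ⟨_, (hQ.integral (volume : Measure (EuclideanSpace ℝ (Fin n))).toSphere).smul (2⁻¹ * C), ?_⟩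
  intro x hx
  have fc := hf.contDiff.continuous
  let H : EuclideanSpace ℝ (Fin n) → ℝ := fun w => g (x + w) * fundSol n (-w)
  have hInt0 : Integrable (fun y => g y * fundSol n (x - y)) := by
    have : (fun y => g y * fundSol n (x - y)) =
        (ball 0 R \ ball z ε).indicator (fun y => f y * fundSol n (x - y)) := by
      funext y
      by_cases h : y ∈ ball 0 R \ ball z ε <;> simp [hg, h]
    rw [this, integrable_indicator_iff (measurableSet_ball.diff measurableSet_ball)]
    have hcomp : IsCompact (closedBall (0 : EuclideanSpace ℝ (Fin n)) R \ ball z ε) :=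
      (isCompact_closedBall _ _).diff isOpen_ball
    refine (ContinuousOn.integrableOn_compact hcomp ?_).mono_set
      (Set.sdiff_subset_sdiff_left ball_subset_closedBall)
    refine fc.continuousOn.mul ?_
    intro y hy
    have hne : x - y ≠ 0 := by
      intro h
      rw [sub_eq_zero] at h
      exact hy.2 (h ▸ hx)
    have := (fundSol_contDiffAt (x - y) hne).continuousAt
    exact (ContinuousAt.comp (f := fun y => x - y) this (by fun_prop)).continuousWithinAt
  have hH : (fun w => H w) = fun w => (fun y => g y * fundSol n (x - y)) (x + w) := by
    funext w
    simp [H]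
  have hInt : Integrable H := by
    have := hInt0.comp_add_left x
    rw [← hH] at this
    exact this
  have e1 : ∫ y, g y * fundSol n (x - y) = ∫ w, H w := by
    rw [hH, integral_add_left_eq_self (fun y => g y * fundSol n (x - y)) x]
  have e2 : ∫ w, H w = 2⁻¹ * ∫ w, (H w + H (-w)) := by
    rw [integral_add hInt hInt.comp_neg, integral_neg_eq_self]
    ring
  rw [e1, e2, polar hn (fun w => H w + H (-w)) (hInt.add hInt.comp_neg), mul_assoc, ← integral_const_mul C]
  congr 2
  funext ζ
  have hζ : ‖(ζ : EuclideanSpace ℝ (Fin n))‖ = 1 := by simp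
  obtain ⟨t1, t1', t2, t2', r1, r2, hi⟩ := inner_int R ε z hz f fc x ζ hx hζ
  rw [← hQe x ζ _ _ _ _ r1 r2, ← hi, ← integral_const_mul C]
  refine setIntegral_congr_fun measurableSet_Ioi fun r hr => ?_
  have hr : 0 < r := hr
  have hF : fundSol n (r • (ζ : EuclideanSpace ℝ (Fin n))) = C * r ^ ((2:ℝ) - n) := by
    rw [fundSol, norm_smul, hζ, mul_one, Real.norm_of_nonneg hr.le]
  have hF' : fundSol n (-(r • (ζ : EuclideanSpace ℝ (Fin n)))) = C * r ^ ((2:ℝ) - n) := by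
    rw [← hF, fundSol, fundSol, norm_neg]
  have hpow : r ^ (n - 1) * r ^ ((2:ℝ) - n) = r := by
    rw [← Real.rpow_natCast, ← Real.rpow_add hr, Nat.cast_sub (by omega)]
    norm_num
  simp only [H, neg_neg, hF, hF', ← sub_eq_add_neg]
  calc _ = C * ((r ^ (n - 1) * r ^ ((2:ℝ) - n)) * (g (x + r • ζ.1) + g (x - r • ζ.1))) := by ring
    _ = _ := by rw [hpow]

theorem main_thm (hn : 3 ≤ n) (k m : ℕ) (hm : k + 2 ≤ m) (R ε : ℝ) (hR : 0 < R)
    (z : EuclideanSpace ℝ (Fin n))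
    (hz : closedBall z ε ⊆ ball (0 : EuclideanSpace ℝ (Fin n)) R)
    (f : EuclideanSpace ℝ (Fin n) → ℝ) (hf : PL (k+1) f)
    (x : EuclideanSpace ℝ (Fin n)) (hx : x ∈ ball z ε) (v : Fin m → EuclideanSpace ℝ (Fin n)) :
    (∫ y in ball (0 : EuclideanSpace ℝ (Fin n)) R \ ball z ε,
        (iteratedFDeriv ℝ m (fun w => fundSol n (w - y)) x v) * f y) = 0 := by
  obtain ⟨P, hP, hPe⟩ := potential hn k R ε z hz f hf
  set Ω := ball (0 : EuclideanSpace ℝ (Fin n)) R \ ball z ε with hΩ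
  have hΩm : MeasurableSet Ω := measurableSet_ball.diff measurableSet_ball
  set g := Ω.indicator f with hg
  obtain ⟨δ, hδ⟩ : ∃ δ, δ = (ε - dist x z) / 2 := ⟨_, rfl⟩
  have hxz : dist x z < ε := hx
  have hδ0 : 0 < δ := by rw [hδ]; linarith
  let χ1 : ContDiffBump (0 : EuclideanSpace ℝ (Fin n)) := ⟨δ / 2, δ, by linarith, by linarith⟩
  let χ2 : ContDiffBump (0 : EuclideanSpace ℝ (Fin n)) := ⟨2 * R, 3 * R, by linarith, by linarith⟩
  let K : EuclideanSpace ℝ (Fin n) → ℝ := fun w => χ2 w * ((1 - χ1 w) * fundSol n w)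
  have hK : ContDiff ℝ ∞ K := by
    rw [contDiff_iff_contDiffAt]
    intro w
    by_cases hw : w = 0
    · subst hw
      have : K =ᶠ[nhds 0] fun _ => 0 := by
        filter_upwards [χ1.eventuallyEq_one] with w hw
        simp [K, hw]
      exact contDiffAt_const.congr_of_eventuallyEq this
    · exact χ2.contDiff.contDiffAt.mul
        ((contDiffAt_const.sub χ1.contDiff.contDiffAt).mul (fundSol_contDiffAt w hw))
  have hKc : HasCompactSupport K := χ2.hasCompactSupport.mul_right
  have hKe : ∀ w : EuclideanSpace ℝ (Fin n), δ < ‖w‖ → ‖w‖ < 2 * R → K w = fundSol n w := by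
    intro w h1 h2
    have a1 : χ1 w = 0 := χ1.zero_of_le_dist (by simpa using h1.le)
    have a2 : χ2 w = 1 := χ2.one_of_mem_closedBall (by simpa using h2.le)
    simp [K, a1, a2]
  have hnear : ∀ x' ∈ ball x δ, ∀ y ∈ Ω, x' ∈ ball z ε ∧ δ < ‖x' - y‖ ∧ ‖x' - y‖ < 2 * R := by
    intro x' hx' y hy
    have hx'' : dist x' x < δ := hx'
    have h0 : dist x' z < ε := by linarith [dist_triangle x' x z]
    have h1 : ε ≤ dist y z := by simpa using hy.2
    have h2 : dist y z ≤ dist x' y + dist x' z := by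
      rw [dist_comm x' y]; exact dist_triangle _ _ _
    have h4 : ‖x'‖ < R := by simpa using hz (ball_subset_closedBall h0)
    have h5 : ‖y‖ < R := by simpa using hy.1
    refine ⟨h0, ?_, ?_⟩
    · rw [← dist_eq_norm]; linarith [dist_triangle x' x z]
    · linarith [norm_sub_le x' y]
  have hgi : LocallyIntegrable g volume := by
    refine Integrable.locallyIntegrable ?_
    rw [hg, integrable_indicator_iff hΩm]
    exact (hf.contDiff.continuous.continuousOn.integrableOn_compact
      (isCompact_closedBall (0 : EuclideanSpace ℝ (Fin n)) R)).mono_set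
        (Set.sdiff_subset.trans ball_subset_closedBall)
  have hconv := conv_iter m g hgi K hK hKc x v
  have hev : (g ⋆[ContinuousLinearMap.mul ℝ ℝ, volume] K) =ᶠ[nhds x] P := by
    filter_upwards [ball_mem_nhds x hδ0] with x' hx'
    have h0 : x' ∈ ball z ε := by
      have hx'' : dist x' x < δ := hx'
      have : dist x' z < ε := by linarith [dist_triangle x' x z]
      exact this
    rw [← hPe x' h0]
    simp only [convolution, ContinuousLinearMap.mul_apply']
    congr 1
    funext y
    by_cases hy : y ∈ Ω
    · obtain ⟨_, h1, h2⟩ := hnear x' hx' y hy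
      rw [hKe _ h1 h2]
    · simp [hg, hy]
  rw [(hev.iteratedFDeriv ℝ m).eq_of_nhds, (hP.mono hm).iter x v] at hconv
  rw [hconv, ← integral_indicator hΩm]
  congr 1
  funext y
  by_cases hy : y ∈ Ω
  · rw [Set.indicator_of_mem hy, hg, Set.indicator_of_mem hy, mul_comm]
    obtain ⟨_, h1, h2⟩ := hnear x (mem_ball_self hδ0) y hy
    rw [iteratedFDeriv_comp_sub]
    have : K =ᶠ[nhds (x - y)] fundSol n := by
      have o1 : ∀ᶠ w : EuclideanSpace ℝ (Fin n) in nhds (x - y), δ < ‖w‖ :=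
        continuous_norm.continuousAt.eventually (lt_mem_nhds h1)
      have o2 : ∀ᶠ w : EuclideanSpace ℝ (Fin n) in nhds (x - y), ‖w‖ < 2 * R :=
        continuous_norm.continuousAt.eventually (gt_mem_nhds h2)
      filter_upwards [o1, o2] with w a b using hKe w a b
    rw [(this.iteratedFDeriv ℝ m).eq_of_nhds]
  · simp [hg, hy]

end Helpers

theorem stmt_2 (n k m : ℕ) (hn : 3 ≤ n) (hm : k + 2 ≤ m) (R ε : ℝ) (hR : 0 < R)
    (hε : 0 < ε) (v : Fin m → Fin n) (p : MvPolynomial (Fin n) ℝ)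
    (hp : p.totalDegree ≤ k) (z : EuclideanSpace ℝ (Fin n))
    (hz : closedBall z ε ⊆ ball (0 : EuclideanSpace ℝ (Fin n)) R)
    (x : EuclideanSpace ℝ (Fin n)) (hx : x ∈ ball z ε) :
    (∫ y in ball (0 : EuclideanSpace ℝ (Fin n)) R \ ball z ε,
        (iteratedFDeriv ℝ m (fun w => fundSol n (w - y)) x fun i => ee (v i)) *
          MvPolynomial.eval (fun i => y i) p) = 0 := by
  exact main_thm hn k m hm R ε hR z hz _ (PL.eval p hp) x hx _
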